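/- Let M = (M,τ,ℓ) be a minimal Markov chain with initial state m0 and let k ≥ 1. Then there exists a Markov chain N with at most k states such that d₁(M,N) < 1 if and only if the underlying labelled directed graph G(M) has a bottom strongly connected component G' = (V,E') and a path m0…m_h such that, for some 0 ≤ p ≤ h, the suffix m_p…m_h is reflected in G' and |{ℓ(m_i) : i < p}| + |V| ≤ k. -/

import Mathlib

/-!
Call a step of a pair of states synchronous if both components move along an edge and the two
source labels agree. The undiscounted distance of two states is below `1` exactly when
synchronous steps lead to a pair at distance `0`: on the pairs from which no such pair is
reachable, the distance could otherwise be lowered further, against its minimality. Pairs at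
distance `0` are probabilistic bisimilar, so by minimality each state of `N` is bisimilar to at
most one state of `M`.

If `d₁(M, N) < 1`, follow a synchronous path to a bisimilar pair and extend it into a bottom
strongly connected component `V` of `M`. The states of `N` bisimilar to a state of `V` number at
least `|V|` and are never left; from the first visit to them on, the path of `M` is reflected in
`V`, while before that visit its labels are all carried by other states of `N`. Conversely, a
component together with one state per label of the prefix, each moving uniformly to all states,
is a chain at distance below `1`.
-/

open Finset

def IsDist {X : Type*} [Fintype X] (μ : X → ℝ) : Prop :=
  (∀ x, 0 ≤ μ x) ∧ ∑ x, μ x = 1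

def IsCoupling {X : Type*} [Fintype X] (μ ν : X → ℝ) (ω : X × X → ℝ) : Prop :=
  IsDist ω ∧ (∀ x, ∑ y, ω (x, y) = μ x) ∧ (∀ y, ∑ x, ω (x, y) = ν y)

noncomputable def kant {X : Type*} [Fintype X] (d : X → X → ℝ) (μ ν : X → ℝ) : ℝ :=
  sInf { c | ∃ ω : X × X → ℝ, IsCoupling μ ν ω ∧ c = ∑ p : X × X, d p.1 p.2 * ω p }

open Classical in
noncomputable def psi {S L : Type*} [Fintype S] (lam : ℝ) (T : S → S → ℝ) (lab : S → L)
    (d : S → S → ℝ) : S → S → ℝ :=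
  fun s t => if lab s = lab t then lam * kant d (T s) (T t) else 1

noncomputable def bdist {S L : Type*} [Fintype S] (lam : ℝ) (T : S → S → ℝ) (lab : S → L) :
    S → S → ℝ := fun s t =>
  sInf { r | ∃ d : S → S → ℝ, (∀ a b, 0 ≤ d a b ∧ d a b ≤ 1) ∧
      (∀ a b, psi lam T lab d a b ≤ d a b) ∧ r = d s t }

def sumT {M N : Type*} (τ : M → M → ℝ) (θ : N → N → ℝ) : M ⊕ N → M ⊕ N → ℝ
  | Sum.inl m, Sum.inl m' => τ m m'
  | Sum.inr n, Sum.inr n' => θ n n'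
  | _, _ => 0

def sumL {M N L : Type*} (ℓ : M → L) (α : N → L) : M ⊕ N → L
  | Sum.inl m => ℓ m
  | Sum.inr n => α n

section Couplings

variable {X Y : Type*} [Fintype X] [Fintype Y] {μ ν : X → ℝ} {ω : X × X → ℝ} {d e : X → X → ℝ}
  {V : Finset X}

lemma IsDist.le_one (hμ : IsDist μ) (x : X) : μ x ≤ 1 :=
  hμ.2 ▸ single_le_sum (fun y _ => hμ.1 y) (mem_univ x)

lemma IsDist.eq_zero_of_notMem (hμ : IsDist μ) (hV : ∀ x, 0 < μ x → x ∈ V) {x : X}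
    (hx : x ∉ V) : μ x = 0 :=
  le_antisymm (not_lt.1 fun h => hx (hV x h)) (hμ.1 x)

lemma IsDist.restrict (hμ : IsDist μ) (hV : ∀ x, 0 < μ x → x ∈ V) :
    IsDist fun x : V => μ x := by
  refine ⟨fun x => hμ.1 x, ?_⟩
  calc
    ∑ x : V, μ x = ∑ x ∈ V, μ x := sum_coe_sort V _
    _ = ∑ x, μ x := sum_subset (subset_univ V) fun x _ hx => hμ.eq_zero_of_notMem hV hx
    _ = 1 := hμ.2

lemma IsDist.isCoupling_mul (hμ : IsDist μ) (hν : IsDist ν) :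
    IsCoupling μ ν (fun p => μ p.1 * ν p.2) := by
  have hfst : ∀ x, ∑ y, μ x * ν y = μ x := fun x => by rw [← mul_sum, hν.2, mul_one]
  have hsnd : ∀ y, ∑ x, μ x * ν y = ν y := fun y => by rw [← sum_mul, hμ.2, one_mul]
  refine ⟨⟨fun p => mul_nonneg (hμ.1 _) (hν.1 _), ?_⟩, hfst, hsnd⟩
  rw [Fintype.sum_prod_type, sum_congr rfl fun x _ => hfst x, hμ.2]

lemma IsDist.isCoupling_sum_fiber [DecidableEq X] {I : Type*} [Fintype I] {ρ : I → ℝ}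
    (hρ : IsDist ρ) {f g : I → X} (hf : ∀ x, ∑ i with f i = x, ρ i = μ x)
    (hg : ∀ x, ∑ i with g i = x, ρ i = ν x) :
    IsCoupling μ ν (fun p => ∑ i with (f i, g i) = p, ρ i) := by
  refine ⟨⟨fun p => sum_nonneg fun i _ => hρ.1 i, (sum_fiberwise _ _ _).trans hρ.2⟩, fun x => ?_,
    fun y => ?_⟩
  · simp only [← hf, Prod.mk.injEq, ← filter_filter, sum_fiberwise]
  · simp only [← hg, Prod.mk.injEq, and_comm (a := f _ = _), ← filter_filter, sum_fiberwise]

lemma IsCoupling.fst_pos (hω : IsCoupling μ ν ω) {p : X × X} (hp : 0 < ω p) : 0 < μ p.1 := by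
  rw [← hω.2.1]
  exact hp.trans_le (single_le_sum (f := fun y => ω (p.1, y)) (fun y _ => hω.1.1 _) (mem_univ p.2))

lemma IsCoupling.snd_pos (hω : IsCoupling μ ν ω) {p : X × X} (hp : 0 < ω p) : 0 < ν p.2 := by
  rw [← hω.2.2]
  exact hp.trans_le (single_le_sum (f := fun x => ω (x, p.2)) (fun x _ => hω.1.1 _) (mem_univ p.1))

lemma IsCoupling.sum_fst_mul (hω : IsCoupling μ ν ω) (f : X → ℝ) :
    ∑ p : X × X, f p.1 * ω p = ∑ x, f x * μ x := by
  simp only [Fintype.sum_prod_type, ← mul_sum, hω.2.1]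

lemma IsCoupling.sum_snd_mul (hω : IsCoupling μ ν ω) (f : X → ℝ) :
    ∑ p : X × X, f p.2 * ω p = ∑ x, f x * ν x := by
  simp only [Fintype.sum_prod_type_right, ← mul_sum, hω.2.2]

lemma isCoupling_comp_equiv_iff (e : Y ≃ X) :
    IsCoupling (fun y => μ (e y)) (fun y => ν (e y)) (fun p => ω (e p.1, e p.2)) ↔
      IsCoupling μ ν ω := by
  have hsum : ∑ p : Y × Y, ω (e p.1, e p.2) = ∑ p, ω p := (e.prodCongr e).sum_comp ω
  have hfst : ∀ y, ∑ y', ω (e y, e y') = ∑ x', ω (e y, x') := fun y =>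
    e.sum_comp fun x' => ω (e y, x')
  have hsnd : ∀ y', ∑ y, ω (e y, e y') = ∑ x, ω (x, e y') := fun y' =>
    e.sum_comp fun x => ω (x, e y')
  simp only [IsCoupling, IsDist, Prod.forall, hsum, hfst, hsnd, e.forall_congr_left,
    Equiv.apply_symm_apply]

lemma kant_le (d : X → X → ℝ) (hω : IsCoupling μ ν ω) :
    kant d μ ν ≤ ∑ p : X × X, d p.1 p.2 * ω p := by
  refine csInf_le ⟨-∑ p : X × X, |d p.1 p.2|, ?_⟩ ⟨ω, hω, rfl⟩
  rintro _ ⟨ω', hω', rfl⟩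
  rw [← sum_neg_distrib]
  refine sum_le_sum fun p _ => neg_le_of_abs_le ?_
  rw [abs_mul, abs_of_nonneg (hω'.1.1 p)]
  exact mul_le_of_le_one_right (abs_nonneg _) (hω'.1.le_one p)

lemma le_kant (hμ : IsDist μ) (hν : IsDist ν) {c : ℝ}
    (h : ∀ ω, IsCoupling μ ν ω → c ≤ ∑ p : X × X, d p.1 p.2 * ω p) : c ≤ kant d μ ν := by
  refine le_csInf ⟨_, _, hμ.isCoupling_mul hν, rfl⟩ ?_
  rintro _ ⟨ω, hω, rfl⟩
  exact h ω hω

lemma kant_nonneg (hd : ∀ a b, 0 ≤ d a b) : 0 ≤ kant d μ ν := by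
  refine Real.sInf_nonneg ?_
  rintro _ ⟨ω, hω, rfl⟩
  exact sum_nonneg fun p _ => mul_nonneg (hd _ _) (hω.1.1 p)

lemma kant_le_mul_kant_add (hμ : IsDist μ) (hν : IsDist ν) {c k : ℝ} (hc : 0 < c)
    (h : ∀ a b, 0 < μ a → 0 < ν b → e a b ≤ c * d a b + k) :
    kant e μ ν ≤ c * kant d μ ν + k := by
  suffices (kant e μ ν - k) / c ≤ kant d μ ν by
    rwa [div_le_iff₀' hc, sub_le_iff_le_add] at this
  refine le_kant hμ hν fun ω hω => ?_
  rw [div_le_iff₀' hc, sub_le_iff_le_add]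
  calc
    kant e μ ν ≤ ∑ p : X × X, e p.1 p.2 * ω p := kant_le e hω
    _ ≤ ∑ p : X × X, (c * d p.1 p.2 + k) * ω p := sum_le_sum fun p _ => by
      rcases (hω.1.1 p).eq_or_lt with hzero | hpos
      · simp only [← hzero, mul_zero, le_refl]
      · exact mul_le_mul_of_nonneg_right (h _ _ (hω.fst_pos hpos) (hω.snd_pos hpos)) hpos.le
    _ = c * ∑ p : X × X, d p.1 p.2 * ω p + k := by
      simp only [add_mul, sum_add_distrib, mul_assoc, ← mul_sum, hω.1.2, mul_one]

lemma kant_mono (hμ : IsDist μ) (hν : IsDist ν) (hde : ∀ a b, d a b ≤ e a b) :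
    kant d μ ν ≤ kant e μ ν := by
  simpa using kant_le_mul_kant_add hμ hν one_pos (d := e) (k := 0) fun a b _ _ => by
    simpa using hde a b

lemma kant_le_one (hμ : IsDist μ) (hν : IsDist ν) (hd : ∀ a b, d a b ≤ 1) : kant d μ ν ≤ 1 := by
  have hω := hμ.isCoupling_mul hν
  calc
    kant d μ ν ≤ ∑ p : X × X, d p.1 p.2 * (μ p.1 * ν p.2) := kant_le d hω
    _ ≤ ∑ p : X × X, μ p.1 * ν p.2 :=
      sum_le_sum fun p _ => mul_le_of_le_one_left (hω.1.1 p) (hd _ _)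
    _ = 1 := hω.1.2

lemma kant_lt_one (hμ : IsDist μ) (hν : IsDist ν) (hd : ∀ a b, d a b ≤ 1) {a b : X}
    (ha : 0 < μ a) (hb : 0 < ν b) (hab : d a b < 1) : kant d μ ν < 1 := by
  have hω := hμ.isCoupling_mul hν
  calc
    kant d μ ν ≤ ∑ p : X × X, d p.1 p.2 * (μ p.1 * ν p.2) := kant_le d hω
    _ < ∑ p : X × X, μ p.1 * ν p.2 :=
      sum_lt_sum (fun p _ => mul_le_of_le_one_left (hω.1.1 p) (hd _ _))
        ⟨(a, b), mem_univ _, mul_lt_of_lt_one_left (mul_pos ha hb) hab⟩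
    _ = 1 := hω.1.2

/- The easy half of Kantorovich duality. -/
lemma sum_mul_sub_sum_mul_le_kant (hμ : IsDist μ) (hν : IsDist ν) {f g : X → ℝ}
    (h : ∀ a b, f a - g b ≤ d a b) : ∑ x, f x * μ x - ∑ x, g x * ν x ≤ kant d μ ν :=
  le_kant hμ hν fun ω hω => by
    rw [← hω.sum_fst_mul, ← hω.sum_snd_mul, ← sum_sub_distrib]
    refine sum_le_sum fun p _ => ?_
    rw [← sub_mul]
    exact mul_le_mul_of_nonneg_right (h _ _) (hω.1.1 p)

lemma kant_comp_equiv (e : Y ≃ X) (d : X → X → ℝ) (μ ν : X → ℝ) :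
    kant (fun y y' => d (e y) (e y')) (fun y => μ (e y)) (fun y => ν (e y)) = kant d μ ν := by
  have hsum : ∀ ω : X × X → ℝ, ∑ p : Y × Y, d (e p.1) (e p.2) * ω (e p.1, e p.2) =
      ∑ p, d p.1 p.2 * ω p := fun ω => (e.prodCongr e).sum_comp fun p => d p.1 p.2 * ω p
  refine congrArg sInf (Set.ext fun c => ?_)
  refine (((e.prodCongr e).symm.arrowCongr (Equiv.refl ℝ)).surjective.exists).trans ?_
  exact exists_congr fun ω => and_congr (isCoupling_comp_equiv_iff e) (by rw [← hsum]; rfl)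

end Couplings

lemma exists_pos_lt_of_pos {X : Type*} [Finite X] (f : X → ℝ) :
    ∃ δ : ℝ, 0 < δ ∧ ∀ x, 0 < f x → δ < f x := by
  obtain ⟨δ, hδ, hlt⟩ := Pi.exists_forall_pos_add_lt (x := fun _ : {x // 0 < f x} => 0)
    (y := fun x => f x) fun x => x.2
  exact ⟨δ, hδ, fun x hx => by simpa using hlt ⟨x, hx⟩⟩

section Distance

variable {S S' L : Type*} [Fintype S] [Fintype S'] {lam : ℝ} {T : S → S → ℝ} {lab : S → L}
  {d e : S → S → ℝ} {s t : S}

lemma psi_of_label_eq (h : lab s = lab t) : psi lam T lab d s t = lam * kant d (T s) (T t) :=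
  if_pos h

lemma psi_of_label_ne (h : lab s ≠ lab t) : psi lam T lab d s t = 1 :=
  if_neg h

lemma psi_nonneg (hlam : 0 ≤ lam) (hd : ∀ a b, 0 ≤ d a b) (s t : S) :
    0 ≤ psi lam T lab d s t := by
  by_cases h : lab s = lab t
  · exact (psi_of_label_eq h).symm ▸ mul_nonneg hlam (kant_nonneg hd)
  · exact (psi_of_label_ne h).symm ▸ zero_le_one

lemma psi_le_one (hlam : lam ∈ Set.Icc (0 : ℝ) 1) (hT : ∀ s, IsDist (T s))
    (hd : ∀ a b, d a b ≤ 1) (s t : S) : psi lam T lab d s t ≤ 1 := by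
  by_cases h : lab s = lab t
  · rw [psi_of_label_eq h]
    calc
      lam * kant d (T s) (T t) ≤ lam * 1 :=
        mul_le_mul_of_nonneg_left (kant_le_one (hT s) (hT t) hd) hlam.1
      _ ≤ 1 := (mul_one lam).trans_le hlam.2
  · exact (psi_of_label_ne h).le

lemma psi_mono (hlam : 0 ≤ lam) (hT : ∀ s, IsDist (T s)) (hde : ∀ a b, d a b ≤ e a b) (s t : S) :
    psi lam T lab d s t ≤ psi lam T lab e s t := by
  by_cases h : lab s = lab t
  · rw [psi_of_label_eq h, psi_of_label_eq h]
    exact mul_le_mul_of_nonneg_left (kant_mono (hT s) (hT t) hde) hlam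
  · rw [psi_of_label_ne h, psi_of_label_ne h]

lemma bdist_le_of_psi_le (hd : ∀ a b, 0 ≤ d a b ∧ d a b ≤ 1)
    (hpsi : ∀ a b, psi lam T lab d a b ≤ d a b) (s t : S) : bdist lam T lab s t ≤ d s t := by
  refine csInf_le ⟨0, ?_⟩ ⟨d, hd, hpsi, rfl⟩
  rintro _ ⟨d', hd', _, rfl⟩
  exact (hd' s t).1

lemma le_bdist (hlam : lam ∈ Set.Icc (0 : ℝ) 1) (hT : ∀ s, IsDist (T s)) {c : ℝ}
    (h : ∀ d : S → S → ℝ, (∀ a b, 0 ≤ d a b ∧ d a b ≤ 1) →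
      (∀ a b, psi lam T lab d a b ≤ d a b) → c ≤ d s t) : c ≤ bdist lam T lab s t := by
  refine le_csInf ⟨1, fun _ _ => 1, fun _ _ => ⟨zero_le_one, le_rfl⟩,
    psi_le_one hlam hT fun _ _ => le_rfl, rfl⟩ ?_
  rintro _ ⟨d, hd, hpsi, rfl⟩
  exact h d hd hpsi

lemma bdist_nonneg (s t : S) : 0 ≤ bdist lam T lab s t := by
  refine Real.sInf_nonneg ?_
  rintro _ ⟨d, hd, _, rfl⟩
  exact (hd s t).1

lemma bdist_le_one (hlam : lam ∈ Set.Icc (0 : ℝ) 1) (hT : ∀ s, IsDist (T s)) (s t : S) :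
    bdist lam T lab s t ≤ 1 :=
  bdist_le_of_psi_le (d := fun _ _ => 1) (fun _ _ => ⟨zero_le_one, le_rfl⟩)
    (psi_le_one hlam hT fun _ _ => le_rfl) s t

lemma psi_bdist (hlam : lam ∈ Set.Icc (0 : ℝ) 1) (hT : ∀ s, IsDist (T s)) (s t : S) :
    psi lam T lab (bdist lam T lab) s t = bdist lam T lab s t := by
  have hle : ∀ s t, psi lam T lab (bdist lam T lab) s t ≤ bdist lam T lab s t := fun s t =>
    le_bdist hlam hT fun d hd hpsi =>
      (psi_mono hlam.1 hT (bdist_le_of_psi_le hd hpsi) s t).trans (hpsi s t)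
  refine le_antisymm (hle s t) ?_
  exact bdist_le_of_psi_le
    (fun a b => ⟨psi_nonneg hlam.1 bdist_nonneg a b, psi_le_one hlam hT (bdist_le_one hlam hT) a b⟩)
    (psi_mono hlam.1 hT hle) s t

lemma label_eq_of_bdist_lt_one (hlam : lam ∈ Set.Icc (0 : ℝ) 1) (hT : ∀ s, IsDist (T s))
    (h : bdist lam T lab s t < 1) : lab s = lab t := by
  by_contra hne
  rw [← psi_bdist hlam hT, psi_of_label_ne hne] at h
  exact lt_irrefl _ h

lemma bdist_eq_mul_kant (hlam : lam ∈ Set.Icc (0 : ℝ) 1) (hT : ∀ s, IsDist (T s))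
    (h : lab s = lab t) :
    bdist lam T lab s t = lam * kant (bdist lam T lab) (T s) (T t) := by
  rw [← psi_of_label_eq h, psi_bdist hlam hT]

lemma bdist_eq_zero_of_isCoupling (hlam : lam ∈ Set.Icc (0 : ℝ) 1) (hT : ∀ s, IsDist (T s))
    {R : S → S → Prop} (hlab : ∀ s t, R s t → lab s = lab t)
    (hR : ∀ s t, R s t → ∃ ω, IsCoupling (T s) (T t) ω ∧ ∀ p, ω p ≠ 0 → R p.1 p.2)
    (hst : R s t) : bdist lam T lab s t = 0 := by
  classical
  let d : S → S → ℝ := fun a b => if R a b then 0 else 1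
  have hd : ∀ a b, 0 ≤ d a b ∧ d a b ≤ 1 := fun a b => by
    by_cases h : R a b <;> simp [d, h]
  have hkant : ∀ a b, R a b → kant d (T a) (T b) = 0 := fun a b hab => by
    obtain ⟨ω, hω, hsupp⟩ := hR a b hab
    refine le_antisymm ((kant_le d hω).trans_eq ?_) (kant_nonneg fun a b => (hd a b).1)
    refine sum_eq_zero fun p _ => mul_eq_zero.2 (or_iff_not_imp_right.2 fun hp => ?_)
    exact if_pos (hsupp p hp)
  have hpsi : ∀ a b, psi lam T lab d a b ≤ d a b := fun a b => by
    by_cases hab : R a b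
    · rw [psi_of_label_eq (hlab a b hab), hkant a b hab, mul_zero]
      exact (hd a b).1
    · exact (psi_le_one hlam hT (fun a b => (hd a b).2) a b).trans_eq (if_neg hab).symm
  exact le_antisymm ((bdist_le_of_psi_le hd hpsi s t).trans_eq (if_pos hst)) (bdist_nonneg s t)

lemma bdist_comp_equiv (e : S' ≃ S) (s t : S') :
    bdist lam (fun a b => T (e a) (e b)) (fun a => lab (e a)) s t =
      bdist lam T lab (e s) (e t) := by
  have hpsi : ∀ d : S → S → ℝ, ∀ a b, psi lam (fun a b => T (e a) (e b)) (fun a => lab (e a))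
      (fun a b => d (e a) (e b)) a b = psi lam T lab d (e a) (e b) := fun d a b => by
    simp only [psi, kant_comp_equiv e d (T (e a)) (T (e b))]
  refine congrArg sInf (Set.ext fun r => ?_)
  refine ((e.symm.arrowCongr (e.symm.arrowCongr (Equiv.refl ℝ))).surjective.exists).trans ?_
  refine exists_congr fun d => ?_
  change (∀ a b, 0 ≤ d (e a) (e b) ∧ d (e a) (e b) ≤ 1) ∧
    (∀ a b, psi lam (fun a b => T (e a) (e b)) (fun a => lab (e a)) (fun a b => d (e a) (e b)) a b
      ≤ d (e a) (e b)) ∧ r = d (e s) (e t) ↔ _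
  simp only [hpsi, e.forall_congr_left, Equiv.apply_symm_apply]

end Distance

section Bisimulation

variable {S L : Type*} [Fintype S] {lam : ℝ} {T : S → S → ℝ} {lab : S → L} {R : S → S → Prop}
  {s t : S}

/-- Probabilistic bisimulations: equivalence relations `R` such that related states have the same
label and assign the same mass to every `R`-class. -/
structure IsBisimulation (T : S → S → ℝ) (lab : S → L) (R : S → S → Prop) : Prop where
  equivalence : Equivalence R
  step : ∀ {s t}, R s t → lab s = lab t ∧
    ∀ u : S, ∑ v : S, Set.indicator {w : S | R u w} (T s) v
      = ∑ v : S, Set.indicator {w : S | R u w} (T t) v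

lemma IsBisimulation.exists_pos_of_pos (hR : IsBisimulation T lab R) (hT : ∀ s x, 0 ≤ T s x)
    (hst : R s t) {s' : S} (hs' : 0 < T s s') : ∃ t', 0 < T t t' ∧ R s' t' := by
  have hpos : 0 < ∑ v, Set.indicator {w | R s' w} (T t) v := by
    rw [← (hR.step hst).2 s']
    refine sum_pos' (fun v _ => Set.indicator_nonneg (fun x _ => hT s x) v) ⟨s', mem_univ _, ?_⟩
    rwa [Set.indicator_of_mem (show s' ∈ {w | R s' w} from hR.equivalence.refl s')]
  obtain ⟨t', -, ht'⟩ := exists_lt_of_sum_lt (f := fun _ : S => (0 : ℝ)) (by simpa using hpos)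
  have hmem : t' ∈ {w | R s' w} := Set.mem_of_indicator_ne_zero ht'.ne'
  exact ⟨t', by rwa [Set.indicator_of_mem hmem] at ht', hmem⟩

lemma sum_indicator_eq_of_kant_eq_zero {d : S → S → ℝ} {μ ν : S → ℝ} (hμ : IsDist μ)
    (hν : IsDist ν) (hd : ∀ a b, 0 ≤ d a b) (hkant : kant d μ ν = 0) {C : Set S}
    (hC : ∀ a b, d a b = 0 → (a ∈ C ↔ b ∈ C)) :
    ∑ v, C.indicator μ v = ∑ v, C.indicator ν v := by
  classical
  obtain ⟨δ, hδ, hlt⟩ := exists_pos_lt_of_pos fun p : S × S => d p.1 p.2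
  let f : S → ℝ := C.indicator fun _ => δ
  have hf : ∀ a b, |f a - f b| ≤ d a b := fun a b => by
    rcases (hd a b).eq_or_lt with hzero | hpos
    · by_cases ha : a ∈ C <;> simp [f, ← hzero, ← hC a b hzero.symm, ha]
    · refine le_trans ?_ (hlt (a, b) hpos).le
      by_cases ha : a ∈ C <;> by_cases hb : b ∈ C <;> simp [f, ha, hb, abs_of_pos hδ, hδ.le]
  have hsum : ∀ ρ : S → ℝ, ∑ x, f x * ρ x = δ * ∑ x, C.indicator ρ x := fun ρ => by
    rw [mul_sum]
    refine sum_congr rfl fun x _ => ?_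
    by_cases hx : x ∈ C <;> simp [f, hx]
  have hle := sum_mul_sub_sum_mul_le_kant hμ hν fun a b => (le_abs_self _).trans (hf a b)
  have hge := sum_mul_sub_sum_mul_le_kant hμ hν (f := fun x => -f x) (g := fun x => -f x)
    fun a b => (le_of_eq (by ring)).trans ((neg_le_abs _).trans (hf a b))
  simp only [neg_mul, sum_neg_distrib, hsum, hkant] at hle hge
  exact mul_left_cancel₀ hδ.ne' (by linarith)

/- The equivalence closure takes the place of the triangle inequality for `bdist`. -/
lemma isBisimulation_eqvGen_bdist_eq_zero (hlam : lam ∈ Set.Ioc (0 : ℝ) 1)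
    (hT : ∀ s, IsDist (T s)) :
    IsBisimulation T lab (Relation.EqvGen fun a b => bdist lam T lab a b = 0) := by
  have hlam' := Set.Ioc_subset_Icc_self hlam
  set R := Relation.EqvGen fun a b => bdist lam T lab a b = 0
  have hclass : ∀ u a b, bdist lam T lab a b = 0 → (R u a ↔ R u b) := fun u a b hab =>
    ⟨fun h => h.trans _ _ _ (.rel _ _ hab), fun h => h.trans _ _ _ (.symm _ _ (.rel _ _ hab))⟩
  refine ⟨Relation.EqvGen.is_equivalence _, fun {s t} hst => ?_⟩
  induction hst with
  | rel x y hxy =>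
    have hlab := label_eq_of_bdist_lt_one hlam' hT (hxy.trans_lt one_pos)
    have hkant : kant (bdist lam T lab) (T x) (T y) = 0 := by
      rw [bdist_eq_mul_kant hlam' hT hlab] at hxy
      exact (mul_eq_zero.1 hxy).resolve_left hlam.1.ne'
    exact ⟨hlab, fun u =>
      sum_indicator_eq_of_kant_eq_zero (hT x) (hT y) bdist_nonneg hkant (hclass u)⟩
  | refl => exact ⟨rfl, fun _ => rfl⟩
  | symm _ _ _ ih => exact ⟨ih.1.symm, fun u => (ih.2 u).symm⟩
  | trans _ _ _ _ _ ih₁ ih₂ => exact ⟨ih₁.1.trans ih₂.1, fun u => (ih₁.2 u).trans (ih₂.2 u)⟩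

end Bisimulation

section SynchronousSteps

variable {M N S L : Type*} [Fintype S] {lam : ℝ} {T : S → S → ℝ} {lab : S → L} {s t s' t' : S}

/-- The edge relation of the directed graph underlying a Markov chain. -/
def Edge (T : S → S → ℝ) (s t : S) : Prop := 0 < T s t

/-- One step of a pair of equally labelled vertices, along an edge in each of two labelled graphs.
Equality of the labels is required at the source of the step only. -/
structure SyncStep (r : M → M → Prop) (r' : N → N → Prop) (ℓ : M → L) (α : N → L)
    (a b : M × N) : Prop where
  fst : r a.1 b.1
  snd : r' a.2 b.2
  label : ℓ a.1 = α a.2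

lemma SyncStep.bdist_lt_one (hlam : lam ∈ Set.Icc (0 : ℝ) 1) (hT : ∀ s, IsDist (T s))
    (h : SyncStep (Edge T) (Edge T) lab lab (s, t) (s', t'))
    (hlt : bdist lam T lab s' t' < 1) : bdist lam T lab s t < 1 := by
  rw [bdist_eq_mul_kant hlam hT h.label]
  exact (mul_le_of_le_one_left (kant_nonneg bdist_nonneg) hlam.2).trans_lt
    (kant_lt_one (hT s) (hT t) (bdist_le_one hlam hT) h.fst h.snd hlt)

lemma psi_one_le_mul_add (hT : ∀ s, IsDist (T s)) {d e : S → S → ℝ} {c k : ℝ} (hc : 0 < c)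
    (hck : 1 ≤ c + k)
    (h : ∀ s' t', SyncStep (Edge T) (Edge T) lab lab (s, t) (s', t') →
      e s' t' ≤ c * d s' t' + k) :
    psi 1 T lab e s t ≤ c * psi 1 T lab d s t + k := by
  by_cases hlab : lab s = lab t
  · rw [psi_of_label_eq hlab, psi_of_label_eq hlab, one_mul, one_mul]
    exact kant_le_mul_kant_add (hT s) (hT t) hc fun s' t' hs ht => h s' t' ⟨hs, ht, hlab⟩
  · rwa [psi_of_label_ne hlab, psi_of_label_ne hlab, mul_one]

/- Where `P` fails, `d = bdist 1 T lab` is lowered to `d - δ * (1 - d)`. Every synchronous step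
from such a pair stays where `P` fails, so this affine change leaves `d` a pre-fixed point of
`psi`; minimality of `d` then forces `d = 1`. -/
lemma bdist_eq_one_of_not {P : S × S → Prop} (hT : ∀ s, IsDist (T s))
    (hstep : ∀ a b, SyncStep (Edge T) (Edge T) lab lab a b → P b → P a)
    (hzero : ∀ p : S × S, bdist 1 T lab p.1 p.2 = 0 → P p) (hst : ¬ P (s, t)) :
    bdist 1 T lab s t = 1 := by
  classical
  have hlam : (1 : ℝ) ∈ Set.Icc (0 : ℝ) 1 := ⟨zero_le_one, le_rfl⟩
  set d := bdist 1 T lab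
  have hd₀ : ∀ a b, 0 ≤ d a b := bdist_nonneg
  have hd₁ : ∀ a b, d a b ≤ 1 := bdist_le_one hlam hT
  have hfix : ∀ a b, psi 1 T lab d a b = d a b := psi_bdist hlam hT
  obtain ⟨δ, hδ, hlt⟩ := exists_pos_lt_of_pos fun p : S × S => d p.1 p.2
  have hδd : ∀ a b, ¬ P (a, b) → δ < d a b := fun a b hab =>
    hlt (a, b) ((hd₀ a b).lt_of_ne fun h => hab (hzero (a, b) h.symm))
  let e : S → S → ℝ := fun a b => if P (a, b) then d a b else (1 + δ) * d a b + -δ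
  have he_of_not : ∀ a b, ¬ P (a, b) → e a b = (1 + δ) * d a b + -δ := fun _ _ hab => if_neg hab
  have hed : ∀ a b, e a b ≤ d a b := fun a b => by
    by_cases hab : P (a, b)
    · exact (if_pos hab).le
    · rw [he_of_not a b hab]
      nlinarith [hd₁ a b]
  have he₀ : ∀ a b, 0 ≤ e a b := fun a b => by
    by_cases hab : P (a, b)
    · exact (hd₀ a b).trans_eq (if_pos hab).symm
    · rw [he_of_not a b hab]
      nlinarith [hδd a b hab, hd₀ a b]
  have hpsi : ∀ a b, psi 1 T lab e a b ≤ e a b := fun a b => by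
    by_cases hab : P (a, b)
    · exact (psi_mono zero_le_one hT hed a b).trans_eq ((hfix a b).trans (if_pos hab).symm)
    · rw [he_of_not a b hab, ← hfix a b]
      exact psi_one_le_mul_add hT (by positivity) (by simp) fun a' b' hab' =>
        (he_of_not a' b' fun h => hab (hstep _ _ hab' h)).le
  have hde : d s t ≤ e s t :=
    bdist_le_of_psi_le (fun a b => ⟨he₀ a b, (hed a b).trans (hd₁ a b)⟩) hpsi s t
  rw [he_of_not s t hst] at hde
  exact le_antisymm (hd₁ s t) (by nlinarith)

theorem bdist_lt_one_iff (hT : ∀ s, IsDist (T s)) :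
    bdist 1 T lab s t < 1 ↔ ∃ s' t',
      Relation.ReflTransGen (SyncStep (Edge T) (Edge T) lab lab) (s, t) (s', t') ∧
        bdist 1 T lab s' t' = 0 := by
  constructor
  · contrapose!
    intro h
    let P : S × S → Prop := fun a => ∃ s' t',
      Relation.ReflTransGen (SyncStep (Edge T) (Edge T) lab lab) a (s', t') ∧
        bdist 1 T lab s' t' = 0
    have hstep : ∀ a b, SyncStep (Edge T) (Edge T) lab lab a b → P b → P a :=
      fun a b hab ⟨s', t', hb, h₀⟩ => ⟨s', t', .head hab hb, h₀⟩
    refine (bdist_eq_one_of_not (P := P) hT hstep (fun p hp => ⟨p.1, p.2, .refl, hp⟩) ?_).ge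
    exact fun ⟨s', t', hreach, h₀⟩ => h s' t' hreach h₀
  · rintro ⟨s', t', hreach, hzero⟩
    suffices ∀ a, Relation.ReflTransGen (SyncStep (Edge T) (Edge T) lab lab) a (s', t') →
        bdist 1 T lab a.1 a.2 < 1 from this _ hreach
    intro a ha
    induction ha using Relation.ReflTransGen.head_induction_on with
    | refl => exact hzero.trans_lt one_pos
    | head hab _ ih => exact hab.bdist_lt_one ⟨zero_le_one, le_rfl⟩ hT ih

end SynchronousSteps

section Sum

variable {M N N' L : Type*} {τ : M → M → ℝ} {θ : N → N → ℝ} {ℓ : M → L} {α : N → L}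

/-- Labelled bisimulations between two labelled directed graphs. -/
structure IsGraphBisim (r : M → M → Prop) (r' : N → N → Prop) (ℓ : M → L) (α : N → L)
    (B : M → N → Prop) : Prop where
  label : ∀ {m n}, B m n → ℓ m = α n
  forth : ∀ {m n m'}, B m n → r m m' → ∃ n', r' n n' ∧ B m' n'
  back : ∀ {m n n'}, B m n → r' n n' → ∃ m', r m m' ∧ B m' n'

lemma SyncStep.inl_inr {m : M} {n : N} {y : (M ⊕ N) × (M ⊕ N)}
    (h : SyncStep (Edge (sumT τ θ)) (Edge (sumT τ θ)) (sumL ℓ α) (sumL ℓ α) (.inl m, .inr n) y) :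
    ∃ m' n', y = (.inl m', .inr n') ∧ SyncStep (Edge τ) (Edge θ) ℓ α (m, n) (m', n') := by
  obtain ⟨m' | n', m'' | n''⟩ := y
  · exact (lt_irrefl _ h.snd).elim
  · exact ⟨m', n'', rfl, h.fst, h.snd, h.label⟩
  · exact (lt_irrefl _ h.fst).elim
  · exact (lt_irrefl _ h.fst).elim

lemma reflTransGen_syncStep_sumT_iff {m : M} {n : N} {y : (M ⊕ N) × (M ⊕ N)} :
    Relation.ReflTransGen (SyncStep (Edge (sumT τ θ)) (Edge (sumT τ θ)) (sumL ℓ α) (sumL ℓ α))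
      (.inl m, .inr n) y ↔ ∃ m' n', y = (.inl m', .inr n') ∧
        Relation.ReflTransGen (SyncStep (Edge τ) (Edge θ) ℓ α) (m, n) (m', n') := by
  constructor
  · intro h
    induction h with
    | refl => exact ⟨m, n, rfl, .refl⟩
    | tail _ hstep ih =>
      obtain ⟨m₁, n₁, rfl, hreach⟩ := ih
      obtain ⟨m', n', rfl, hstep'⟩ := hstep.inl_inr
      exact ⟨m', n', rfl, hreach.tail hstep'⟩
  · rintro ⟨m', n', rfl, h⟩
    have hlift : ∀ a b, SyncStep (Edge τ) (Edge θ) ℓ α a b →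
        SyncStep (Edge (sumT τ θ)) (Edge (sumT τ θ)) (sumL ℓ α) (sumL ℓ α)
          (.inl a.1, .inr a.2) (.inl b.1, .inr b.2) := fun _ _ hab => ⟨hab.fst, hab.snd, hab.label⟩
    exact h.lift (fun a => (Sum.inl a.1, Sum.inr a.2)) hlift

variable [Fintype M] [Fintype N] [Fintype N']

lemma isDist_sumT (hτ : ∀ m, IsDist (τ m)) (hθ : ∀ n, IsDist (θ n)) (s : M ⊕ N) :
    IsDist (sumT τ θ s) := by
  rcases s with m | n
  · exact ⟨Sum.forall.2 ⟨(hτ m).1, fun _ => le_rfl⟩, by simp [sumT, (hτ m).2]⟩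
  · exact ⟨Sum.forall.2 ⟨fun _ => le_rfl, (hθ n).1⟩, by simp [sumT, (hθ n).2]⟩

theorem bdist_sumT_lt_one_iff (hτ : ∀ m, IsDist (τ m)) (hθ : ∀ n, IsDist (θ n)) {m : M} {n : N} :
    bdist 1 (sumT τ θ) (sumL ℓ α) (.inl m) (.inr n) < 1 ↔ ∃ m' n',
      Relation.ReflTransGen (SyncStep (Edge τ) (Edge θ) ℓ α) (m, n) (m', n') ∧
        bdist 1 (sumT τ θ) (sumL ℓ α) (.inl m') (.inr n') = 0 := by
  rw [bdist_lt_one_iff (isDist_sumT hτ hθ)]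
  constructor
  · rintro ⟨s', t', hreach, hzero⟩
    obtain ⟨m', n', heq, hreach'⟩ := reflTransGen_syncStep_sumT_iff.1 hreach
    obtain ⟨rfl, rfl⟩ := Prod.mk.inj heq
    exact ⟨m', n', hreach', hzero⟩
  · rintro ⟨m', n', hreach, hzero⟩
    exact ⟨_, _, reflTransGen_syncStep_sumT_iff.2 ⟨m', n', rfl, hreach⟩, hzero⟩

lemma bdist_sumT_comp_equiv (e : N' ≃ N) (lam : ℝ) (m : M) (n : N') :
    bdist lam (sumT τ fun i j => θ (e i) (e j)) (sumL ℓ fun i => α (e i)) (.inl m) (.inr n) =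
      bdist lam (sumT τ θ) (sumL ℓ α) (.inl m) (.inr (e n)) := by
  have hT : (fun a b => sumT τ θ ((Equiv.refl M).sumCongr e a) ((Equiv.refl M).sumCongr e b)) =
      sumT τ fun i j => θ (e i) (e j) := by
    funext a b
    cases a <;> cases b <;> rfl
  have hL : (fun a => sumL ℓ α ((Equiv.refl M).sumCongr e a)) = sumL ℓ fun i => α (e i) := by
    funext a
    cases a <;> rfl
  have h := bdist_comp_equiv (lam := lam) (T := sumT τ θ) (lab := sumL ℓ α)
    ((Equiv.refl M).sumCongr e) (.inl m) (.inr n)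
  rwa [hT, hL] at h

lemma exists_fin_bdist_sumT_lt (hθ : ∀ n, IsDist (θ n)) {lam c : ℝ} {m : M} {x : N}
    (hlt : bdist lam (sumT τ θ) (sumL ℓ α) (.inl m) (.inr x) < c) :
    ∃ (hn : 0 < Fintype.card N) (θ' : Fin (Fintype.card N) → Fin (Fintype.card N) → ℝ)
      (α' : Fin (Fintype.card N) → L), (∀ i, IsDist (θ' i)) ∧
        bdist lam (sumT τ θ') (sumL ℓ α') (.inl m) (.inr ⟨0, hn⟩) < c := by
  classical
  have hn : 0 < Fintype.card N := Fintype.card_pos_iff.2 ⟨x⟩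
  let e₀ := (Fintype.equivFin N).symm
  let e := e₀.trans (Equiv.swap (e₀ ⟨0, hn⟩) x)
  have he : e ⟨0, hn⟩ = x := Equiv.swap_apply_left _ _
  refine ⟨hn, fun i j => θ (e i) (e j), fun i => α (e i), fun i => ?_, ?_⟩
  · exact ⟨fun j => (hθ (e i)).1 (e j), (e.sum_comp (θ (e i))).trans (hθ (e i)).2⟩
  · rwa [bdist_sumT_comp_equiv, he]

namespace IsBisimulation

variable {R : M ⊕ N → M ⊕ N → Prop}

lemma comap_inl (hR : IsBisimulation (sumT τ θ) (sumL ℓ α) R) :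
    IsBisimulation τ ℓ fun m m' => R (.inl m) (.inl m') where
  equivalence := hR.equivalence.comap Sum.inl
  step {m m'} hmm' := by
    classical
    refine ⟨(hR.step hmm').1, fun u => ?_⟩
    simpa [Fintype.sum_sum_type, Set.indicator_apply, sumT] using (hR.step hmm').2 (.inl u)

lemma leftUnique_inl_inr (hR : IsBisimulation (sumT τ θ) (sumL ℓ α) R)
    (hmin : ∀ R, IsBisimulation τ ℓ R → ∀ m m', R m m' → m = m') :
    Relator.LeftUnique fun (m : M) (n : N) => R (.inl m) (.inr n) :=
  fun m m' _ hm hm' =>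
    hmin _ hR.comap_inl m m' (hR.equivalence.trans hm (hR.equivalence.symm hm'))

lemma isGraphBisim (hR : IsBisimulation (sumT τ θ) (sumL ℓ α) R) (hτ : ∀ m m', 0 ≤ τ m m')
    (hθ : ∀ n n', 0 ≤ θ n n') :
    IsGraphBisim (Edge τ) (Edge θ) ℓ α fun m n => R (.inl m) (.inr n) := by
  have hT : ∀ s x, 0 ≤ sumT τ θ s x := by
    rintro (m | n) (m' | n')
    exacts [hτ m m', le_rfl, le_rfl, hθ n n']
  refine ⟨fun h => (hR.step h).1, fun {m n m'} h hm => ?_, fun {m n n'} h hn => ?_⟩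
  · obtain ⟨m'' | n', hpos, hrel⟩ := hR.exists_pos_of_pos hT h (s' := .inl m') hm
    · exact (lt_irrefl _ hpos).elim
    · exact ⟨n', hpos, hrel⟩
  · obtain ⟨m' | n'', hpos, hrel⟩ :=
      hR.exists_pos_of_pos hT (hR.equivalence.symm h) (s' := .inr n') hn
    · exact ⟨m', hpos, hR.equivalence.symm hrel⟩
    · exact (lt_irrefl _ hpos).elim

end IsBisimulation

end Sum

section Graphs

variable {M N L : Type*} {r : M → M → Prop} {r' : N → N → Prop} {ℓ : M → L} {α : N → L}
  {B : M → N → Prop} {V : Finset M}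

lemma exists_path_of_reflTransGen {a b : M} (h : Relation.ReflTransGen r a b) :
    ∃ (n : ℕ) (p : ℕ → M), p 0 = a ∧ p n = b ∧ ∀ i < n, r (p i) (p (i + 1)) := by
  induction h using Relation.ReflTransGen.head_induction_on with
  | refl => exact ⟨0, fun _ => b, rfl, rfl, fun i hi => absurd hi i.not_lt_zero⟩
  | @head a c hac _ ih =>
    obtain ⟨n, p, h₀, hn, hp⟩ := ih
    refine ⟨n + 1, fun i => Nat.casesOn i a p, rfl, hn, fun i hi => ?_⟩
    cases i with
    | zero =>
      rw [← h₀] at hac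
      exact hac
    | succ j => exact hp j (Nat.lt_of_succ_lt_succ hi)

/-- Bottom strongly connected components of a directed graph, given by their vertex sets. -/
structure IsBottomSCC (r : M → M → Prop) (V : Finset M) : Prop where
  nonempty : V.Nonempty
  closed : ∀ u ∈ V, ∀ v, r u v → v ∈ V
  connected : ∀ u ∈ V, ∀ v ∈ V, Relation.ReflTransGen r u v

lemma exists_isBottomSCC_reachable [Finite M] (r : M → M → Prop) (m : M) :
    ∃ V, IsBottomSCC r V ∧ ∀ v ∈ V, Relation.ReflTransGen r m v := by
  have := Fintype.ofFinite M
  classical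
  let reach : M → Finset M := fun x => {y | Relation.ReflTransGen r x y}
  have mem_reach : ∀ {x y}, y ∈ reach x ↔ Relation.ReflTransGen r x y := by simp [reach]
  obtain ⟨x, hmx, hmin⟩ := exists_min_image (reach m) (fun y => #(reach y))
    ⟨m, mem_reach.2 .refl⟩
  rw [mem_reach] at hmx
  refine ⟨reach x, ⟨⟨x, mem_reach.2 .refl⟩, ?_, ?_⟩, fun v hv => hmx.trans (mem_reach.1 hv)⟩
  · exact fun u hu v huv => mem_reach.2 ((mem_reach.1 hu).tail huv)
  · intro u hu v hv
    have hsub : reach u ⊆ reach x := fun y hy =>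
      mem_reach.2 ((mem_reach.1 hu).trans (mem_reach.1 hy))
    have heq : reach u = reach x :=
      eq_of_subset_of_card_le hsub (hmin u (mem_reach.2 (hmx.trans (mem_reach.1 hu))))
    exact mem_reach.1 (heq ▸ hv)

/-- The part `p q, …, p h` of a path is reflected in the subgraph with vertex set `V`. -/
def IsReflected (r : M → M → Prop) (ℓ : M → L) (V : Finset M) (p : ℕ → M) (q h : ℕ) : Prop :=
  ∃ p' : ℕ → M, (∀ i, q ≤ i → i ≤ h → p' i ∈ V) ∧ p' h = p h ∧
    (∀ i, q ≤ i → i < h → r (p' i) (p' (i + 1))) ∧ ∀ i, q ≤ i → i ≤ h → ℓ (p' i) = ℓ (p i)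

namespace IsGraphBisim

lemma exists_reflTransGen_syncStep (hB : IsGraphBisim r r' ℓ α B) {m m' : M} {n : N}
    (hmn : B m n) (hm : Relation.ReflTransGen r m m') :
    ∃ n', B m' n' ∧ Relation.ReflTransGen (SyncStep r r' ℓ α) (m, n) (m', n') := by
  induction hm with
  | refl => exact ⟨n, hmn, .refl⟩
  | tail _ hstep ih =>
    obtain ⟨n₁, hn₁, hreach⟩ := ih
    obtain ⟨n₂, hn, hn₂⟩ := hB.forth hn₁ hstep
    exact ⟨n₂, hn₂, hreach.tail ⟨hstep, hn, hB.label hn₁⟩⟩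

lemma exists_mem_of_syncPath (hB : IsGraphBisim r r' ℓ α B)
    (hclosed : ∀ u ∈ V, ∀ v, r u v → v ∈ V) {P : ℕ → M × N} {q h : ℕ}
    (hP : ∀ i < h, SyncStep r r' ℓ α (P i) (P (i + 1))) (hq : ∃ v ∈ V, B v (P q).2)
    {i : ℕ} (hqi : q ≤ i) (hih : i ≤ h) : ∃ v ∈ V, B v (P i).2 := by
  induction i, hqi using Nat.le_induction with
  | base => exact hq
  | succ i _ ih =>
    obtain ⟨v, hv, hBv⟩ := ih (Nat.le_of_succ_le hih)
    obtain ⟨v', hvv', hBv'⟩ := hB.back hBv (hP i hih).snd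
    exact ⟨v', hclosed v hv v' hvv', hBv'⟩

lemma isReflected_of_syncPath (hB : IsGraphBisim r r' ℓ α B) (hunique : Relator.LeftUnique B)
    (hclosed : ∀ u ∈ V, ∀ v, r u v → v ∈ V) {P : ℕ → M × N} {q h : ℕ}
    (hP : ∀ i < h, SyncStep r r' ℓ α (P i) (P (i + 1))) (hPh : B (P h).1 (P h).2) (hqh : q ≤ h)
    (hq : ∃ v ∈ V, B v (P q).2) : IsReflected r ℓ V (fun i => (P i).1) q h := by
  have : Nonempty M := ⟨(P h).1⟩
  have hlabel : ∀ i ≤ h, ℓ (P i).1 = α (P i).2 := fun i hi =>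
    hi.lt_or_eq.elim (fun hlt => (hP i hlt).label) fun heq => heq ▸ hB.label hPh
  have hmatch : ∀ i, q ≤ i → i ≤ h → ∃ v ∈ V, B v (P i).2 := fun i =>
    hB.exists_mem_of_syncPath hclosed hP hq
  choose! p' hp'V hp'B using hmatch
  refine ⟨p', hp'V, hunique (hp'B h hqh le_rfl) hPh, fun i hqi hih => ?_, fun i hqi hih => ?_⟩
  · obtain ⟨v, hstep, hv⟩ := hB.back (hp'B i hqi hih.le) (hP i hih).snd
    rwa [← hunique hv (hp'B (i + 1) (Nat.le_succ_of_le hqi) hih)]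
  · rw [hlabel i hih, hB.label (hp'B i hqi hih)]

lemma card_le_card_filter_exists_mem [Fintype N] [DecidablePred fun n => ∃ v ∈ V, B v n]
    (hB : IsGraphBisim r r' ℓ α B) (hunique : Relator.LeftUnique B)
    (hconn : ∀ u ∈ V, ∀ v ∈ V, Relation.ReflTransGen r u v) {v₀ : M} (hv₀ : v₀ ∈ V) {n₀ : N}
    (h₀ : B v₀ n₀) : #V ≤ #{n | ∃ v ∈ V, B v n} := by
  refine card_le_card_of_forall_subsingleton B (fun v hv => ?_) fun n _ v hv v' hv' =>
    hunique hv.2 hv'.2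
  obtain ⟨n, hn, _⟩ := hB.exists_reflTransGen_syncStep h₀ (hconn v₀ hv₀ v hv)
  exact ⟨n, (mem_filter_univ _).2 ⟨v, hv, hn⟩, hn⟩

open Classical in
theorem exists_isReflected [Finite M] [Fintype N] (hB : IsGraphBisim r r' ℓ α B)
    (hunique : Relator.LeftUnique B) {m₀ m : M} {n₀ n : N}
    (hreach : Relation.ReflTransGen (SyncStep r r' ℓ α) (m₀, n₀) (m, n)) (hmn : B m n) :
    ∃ V, IsBottomSCC r V ∧ ∃ (h : ℕ) (p : ℕ → M), p 0 = m₀ ∧ (∀ i < h, r (p i) (p (i + 1))) ∧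
      ∃ q ≤ h, IsReflected r ℓ V p q h ∧
        #((range q).image fun i => ℓ (p i)) + #V ≤ Fintype.card N := by
  obtain ⟨V, hV, hmV⟩ := exists_isBottomSCC_reachable r m
  obtain ⟨v₀, hv₀⟩ := hV.nonempty
  obtain ⟨n₁, hn₁, hreach₁⟩ := hB.exists_reflTransGen_syncStep hmn (hmV v₀ hv₀)
  obtain ⟨h, P, hP₀, hPh, hP⟩ := exists_path_of_reflTransGen (hreach.trans hreach₁)
  have hlast : B (P h).1 (P h).2 := hPh ▸ hn₁
  have hvisit : ∃ i, ∃ v ∈ V, B v (P i).2 := ⟨h, v₀, hv₀, hPh ▸ hn₁⟩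
  have hqh : Nat.find hvisit ≤ h := Nat.find_min' hvisit ⟨v₀, hv₀, hPh ▸ hn₁⟩
  refine ⟨V, hV, h, fun i => (P i).1, congrArg Prod.fst hP₀, fun i hi => (hP i hi).fst,
    Nat.find hvisit, hqh,
    hB.isReflected_of_syncPath hunique hV.closed hP hlast hqh (Nat.find_spec hvisit), ?_⟩
  have hlabels : (range (Nat.find hvisit)).image (fun i => ℓ (P i).1) ⊆
      ({n | ¬ ∃ v ∈ V, B v n} : Finset N).image α := by
    refine image_subset_iff.2 fun i hi => ?_
    have hi' := mem_range.1 hi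
    rw [(hP i (hi'.trans_le hqh)).label]
    exact mem_image_of_mem α ((mem_filter_univ _).2 (Nat.find_min hvisit hi'))
  calc
    _ ≤ #{n | ¬ ∃ v ∈ V, B v n} + #{n | ∃ v ∈ V, B v n} :=
      add_le_add ((card_le_card hlabels).trans card_image_le)
        (hB.card_le_card_filter_exists_mem hunique hV.connected hv₀ hn₁)
    _ = Fintype.card N := by
      rw [add_comm, card_filter_add_card_filter_not, card_univ]

end IsGraphBisim

end Graphs

section Approximation

variable {M L : Type*} {τ : M → M → ℝ} {ℓ : M → L} {A : Finset L} {V : Finset M}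

/-- The transitions of the approximating chain: a copy of `τ` on the component `V`, preceded by one
state for each label in `A` that moves uniformly to all states. -/
noncomputable def approxT (τ : M → M → ℝ) (A : Finset L) (V : Finset M) : A ⊕ V → A ⊕ V → ℝ
  | .inl _, _ => (Fintype.card (A ⊕ V) : ℝ)⁻¹
  | .inr u, .inr v => τ u v
  | .inr _, .inl _ => 0

/-- The labels of the approximating chain with transitions `approxT τ A V`. -/
def approxL (ℓ : M → L) (A : Finset L) (V : Finset M) : A ⊕ V → L :=
  Sum.elim (fun a => a) fun v => ℓ v

lemma edge_approxT_inl (τ : M → M → ℝ) (a : A) (y : A ⊕ V) : Edge (approxT τ A V) (.inl a) y :=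
  inv_pos.2 (Nat.cast_pos.2 (Fintype.card_pos_iff.2 ⟨y⟩))

lemma reflTransGen_syncStep_approxT_of_mem {p p' : ℕ → M} {q h : ℕ} (hq : q ≤ h)
    (hp : ∀ i < h, 0 < τ (p i) (p (i + 1))) (hp'V : ∀ i, q ≤ i → i ≤ h → p' i ∈ V)
    (hp' : ∀ i, q ≤ i → i < h → 0 < τ (p' i) (p' (i + 1)))
    (hlabel : ∀ i, q ≤ i → i ≤ h → ℓ (p' i) = ℓ (p i)) :
    Relation.ReflTransGen (SyncStep (Edge τ) (Edge (approxT τ A V)) ℓ (approxL ℓ A V))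
      (p q, .inr ⟨p' q, hp'V q le_rfl hq⟩) (p h, .inr ⟨p' h, hp'V h hq le_rfl⟩) := by
  induction h, hq using Nat.le_induction with
  | base => exact .refl
  | succ h hq ih =>
    refine (ih (fun i hi => hp i (Nat.lt_succ_of_lt hi))
      (fun i hqi hi => hp'V i hqi (Nat.le_succ_of_le hi))
      (fun i hqi hi => hp' i hqi (Nat.lt_succ_of_lt hi))
      fun i hqi hi => hlabel i hqi (Nat.le_succ_of_le hi)).tail ?_
    exact ⟨hp h h.lt_succ_self, hp' h hq h.lt_succ_self, (hlabel h hq h.le_succ).symm⟩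

lemma exists_reflTransGen_syncStep_approxT {p : ℕ → M} {q : ℕ}
    (hp : ∀ i < q, 0 < τ (p i) (p (i + 1))) (hA : ∀ i < q, ℓ (p i) ∈ A) (y : A ⊕ V) :
    ∃ x, Relation.ReflTransGen (SyncStep (Edge τ) (Edge (approxT τ A V)) ℓ (approxL ℓ A V))
      (p 0, x) (p q, y) := by
  induction q generalizing y with
  | zero => exact ⟨y, .refl⟩
  | succ q ih =>
    obtain ⟨x, hx⟩ := ih (fun i hi => hp i (Nat.lt_succ_of_lt hi))
      (fun i hi => hA i (Nat.lt_succ_of_lt hi)) (.inl ⟨ℓ (p q), hA q q.lt_succ_self⟩)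
    exact ⟨x, hx.tail ⟨hp q q.lt_succ_self, edge_approxT_inl τ _ y, rfl⟩⟩

variable [Fintype M]

lemma isDist_approxT (hτ : ∀ m, IsDist (τ m)) (hclosed : ∀ u ∈ V, ∀ v, 0 < τ u v → v ∈ V)
    (x : A ⊕ V) : IsDist (approxT τ A V x) := by
  rcases x with a | u
  · have : Nonempty (A ⊕ V) := ⟨.inl a⟩
    refine ⟨fun y => inv_nonneg.2 (Nat.cast_nonneg _), ?_⟩
    simp only [approxT, sum_const, card_univ, nsmul_eq_mul]
    exact mul_inv_cancel₀ (Nat.cast_ne_zero.2 Fintype.card_ne_zero)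
  · refine ⟨Sum.forall.2 ⟨fun _ => le_rfl, fun v => (hτ u).1 v⟩, ?_⟩
    simpa [approxT] using ((hτ u).restrict (hclosed u u.2)).2

lemma bdist_sumT_approxT_eq_zero {lam : ℝ} (hlam : lam ∈ Set.Icc (0 : ℝ) 1)
    (hτ : ∀ m, IsDist (τ m)) (hclosed : ∀ u ∈ V, ∀ v, 0 < τ u v → v ∈ V) (u : V) :
    bdist lam (sumT τ (approxT τ A V)) (sumL ℓ (approxL ℓ A V)) (.inl u) (.inr (.inr u)) = 0 := by
  classical
  let f : V → M ⊕ (A ⊕ V) := fun v => .inl v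
  let g : V → M ⊕ (A ⊕ V) := fun v => .inr (.inr v)
  refine bdist_eq_zero_of_isCoupling hlam (isDist_sumT hτ (isDist_approxT hτ hclosed))
    (R := fun s t => ∃ v, s = f v ∧ t = g v) ?_ ?_ ⟨u, rfl, rfl⟩
  · rintro _ _ ⟨v, rfl, rfl⟩
    rfl
  · rintro _ _ ⟨w, rfl, rfl⟩
    have hfst : ∀ m, ∑ v with f v = .inl m, τ w v = τ w m := fun m => by
      simp only [f, Sum.inl.injEq, sum_filter]
      rw [sum_coe_sort V fun v => if v = m then τ w v else 0, sum_ite_eq']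
      exact ite_eq_left_iff.2 fun hm => ((hτ w).eq_zero_of_notMem (hclosed w w.2) hm).symm
    refine ⟨_, ((hτ w).restrict (hclosed w w.2)).isCoupling_sum_fiber (f := f) (g := g) ?_ ?_,
      fun p hp => ?_⟩
    · rintro (m | x)
      · exact hfst m
      · simp [f, sumT]
    · rintro (m | a | v)
      · simp [g, sumT]
      · simp [g, sumT, approxT]
      · simp [g, sumT, approxT, filter_eq']
    · obtain ⟨v, hv, -⟩ := exists_ne_zero_of_sum_ne_zero hp
      obtain rfl := (mem_filter_univ _).1 hv
      exact ⟨v, rfl, rfl⟩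

lemma exists_bdist_sumT_approxT_lt_one (hτ : ∀ m, IsDist (τ m))
    (hclosed : ∀ u ∈ V, ∀ v, 0 < τ u v → v ∈ V) {p : ℕ → M} {q h : ℕ}
    (hp : ∀ i < h, 0 < τ (p i) (p (i + 1))) (hq : q ≤ h)
    (hreflected : IsReflected (Edge τ) ℓ V p q h) (hA : ∀ i < q, ℓ (p i) ∈ A) :
    ∃ x, bdist 1 (sumT τ (approxT τ A V)) (sumL ℓ (approxL ℓ A V)) (.inl (p 0)) (.inr x) < 1 := by
  obtain ⟨p', hp'V, hp'h, hp', hlabel⟩ := hreflected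
  obtain ⟨x, hx⟩ := exists_reflTransGen_syncStep_approxT
    (fun i hi => hp i (hi.trans_le hq)) hA (.inr ⟨p' q, hp'V q le_rfl hq⟩)
  have hsuffix := reflTransGen_syncStep_approxT_of_mem (A := A) hq hp hp'V hp' hlabel
  refine ⟨x, (bdist_sumT_lt_one_iff hτ (isDist_approxT hτ hclosed)).2
    ⟨_, _, hx.trans hsuffix, ?_⟩⟩
  rw [← hp'h]
  exact bdist_sumT_approxT_eq_zero ⟨zero_le_one, le_rfl⟩ hτ hclosed ⟨p' h, hp'V h hq le_rfl⟩

end Approximation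

open Classical in
theorem stmt18 {M L : Type*} [Fintype M] [Nonempty M] (k : ℕ) (hk : 1 ≤ k)
    (τ : M → M → ℝ) (hτ : ∀ m, IsDist (τ m)) (ℓ : M → L) (m0 : M)
    (hmin : ∀ R : M → M → Prop, Equivalence R →
      (∀ m n, R m n → ℓ m = ℓ n ∧
        ∀ u : M, ∑ v : M, Set.indicator {w : M | R u w} (τ m) v
          = ∑ v : M, Set.indicator {w : M | R u w} (τ n) v) →
      ∀ m n, R m n → m = n) :
    (∃ (n : ℕ) (hn : 0 < n), n ≤ k ∧
      ∃ (θ : Fin n → Fin n → ℝ) (α : Fin n → L),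
        (∀ i, IsDist (θ i)) ∧
        bdist 1 (sumT τ θ) (sumL ℓ α) (Sum.inl m0) (Sum.inr ⟨0, hn⟩) < 1)
    ↔
    (∃ V : Finset M, V.Nonempty ∧
      (∀ u ∈ V, ∀ v : M, 0 < τ u v → v ∈ V) ∧
      (∀ u ∈ V, ∀ v ∈ V, Relation.ReflTransGen (fun a b : M => 0 < τ a b) u v) ∧
      ∃ (h : ℕ) (p : ℕ → M), p 0 = m0 ∧ (∀ i < h, 0 < τ (p i) (p (i + 1))) ∧
        ∃ q ≤ h,
          (∃ p' : ℕ → M,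
            (∀ i, q ≤ i → i ≤ h → p' i ∈ V) ∧
            p' h = p h ∧
            (∀ i, q ≤ i → i < h → 0 < τ (p' i) (p' (i + 1))) ∧
            (∀ i, q ≤ i → i ≤ h → ℓ (p' i) = ℓ (p i))) ∧
          ((Finset.range q).image (fun i => ℓ (p i))).card + V.card ≤ k) := by
  constructor
  · rintro ⟨n, _, hnk, θ, α, hθ, hlt⟩
    obtain ⟨m, n', hreach, hzero⟩ := (bdist_sumT_lt_one_iff hτ hθ).1 hlt
    have hR := isBisimulation_eqvGen_bdist_eq_zero (lab := sumL ℓ α) ⟨one_pos, le_rfl⟩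
      (isDist_sumT hτ hθ)
    have hunique := hR.leftUnique_inl_inr fun R hR => hmin R hR.equivalence fun _ _ => hR.step
    obtain ⟨V, hV, h, p, hp0, hp, q, hq, hreflected, hcard⟩ :=
      (hR.isGraphBisim (fun m => (hτ m).1) (fun i => (hθ i).1)).exists_isReflected hunique hreach
        (.rel _ _ hzero)
    exact ⟨V, hV.nonempty, hV.closed, hV.connected, h, p, hp0, hp, q, hq, hreflected,
      hcard.trans ((Fintype.card_fin n).trans_le hnk)⟩
  · rintro ⟨V, _, hclosed, _, h, p, rfl, hp, q, hq, hreflected, hcard⟩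
    obtain ⟨x, hx⟩ := exists_bdist_sumT_approxT_lt_one hτ hclosed hp hq hreflected
      (A := (range q).image fun i => ℓ (p i)) fun i hi => mem_image_of_mem _ (mem_range.2 hi)
    have happrox := isDist_approxT (A := (range q).image fun i => ℓ (p i)) hτ hclosed
    obtain ⟨hn, θ, α, hθ, hlt⟩ := exists_fin_bdist_sumT_lt happrox hx
    refine ⟨_, hn, ?_, θ, α, hθ, hlt⟩
    simpa only [Fintype.card_sum, Fintype.card_coe] using hcard
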